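/- For every s₁ > 0 there exists C > 0 such that for every μ ∈ ℤ, all nonnegative sequences ω⁽¹⁾, ω⁽²⁾, ω⁽³⁾ : ℤ² → [0,∞), and every j ∈ {1,2,3}: ( Σ_{n ∈ ℤ²} ( Σ_{(n₁,n₂,n₃) ∈ (ℤ²)³ : n₁ − n₂ + n₃ = n, Φ(n,n₁,n₂,n₃) = μ} ω⁽¹⁾_{n₁} ω⁽²⁾_{n₂} ω⁽³⁾_{n₃} )² )^{1/2} ≤ C ‖ω⁽ʲ⁾‖_{ℓ²(ℤ²)} ∏_{l ∈ {1,2,3}, l ≠ j} ‖ω⁽ˡ⁾‖_{ℓ²_{s₁}(ℤ²)}. -/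

import Mathlib

open scoped ENNReal NNReal

/-- `⟨n⟩ = (1+|n|²)^{1/2}` for `n ∈ ℤ²`. -/
noncomputable def jbZ2 (n : ℤ × ℤ) : ℝ := Real.sqrt (1 + ((n.1 : ℝ) ^ 2 + (n.2 : ℝ) ^ 2))

/-- `Φ(n,n₁,n₂,n₃) = |n|² - |n₁|² + |n₂|² - |n₃|²`. -/
def PhiZ2 (n n₁ n₂ n₃ : ℤ × ℤ) : ℤ :=
  (n.1 ^ 2 + n.2 ^ 2) - (n₁.1 ^ 2 + n₁.2 ^ 2) + (n₂.1 ^ 2 + n₂.2 ^ 2) - (n₃.1 ^ 2 + n₃.2 ^ 2)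

/-- The weighted `ℓ²_s(ℤ²)` norm (valued in `[0,∞]`). -/
noncomputable def l2sZ2 (s : ℝ) (ω : ℤ × ℤ → ℝ≥0) : ℝ≥0∞ :=
  (∑' n : ℤ × ℤ, ENNReal.ofReal (jbZ2 n ^ (2 * s)) * ((ω n : ℝ≥0∞)) ^ 2) ^ (1/2 : ℝ)

lemma aux_pointwise (ε : ℝ) (hε : 0 < ε) (P : ℝ) (hP : 2 ≤ P) (k : ℕ) :
    ((k : ℝ) + 1) ≤ (if P < 2 ^ (1/ε) then (1 + 1 / (ε * Real.log 2)) else 1) * (P ^ k) ^ ε := by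
  have hl : 0 < Real.log 2 := Real.log_pos (by norm_num)
  have e1 : (P ^ k) ^ ε = (P ^ ε) ^ k := by
    rw [← Real.rpow_natCast, ← Real.rpow_natCast, ← Real.rpow_mul (by linarith),
      ← Real.rpow_mul (by linarith), mul_comm]
  split_ifs with h
  · have h2 : 1 + k * (ε * Real.log 2) ≤ (P ^ k) ^ ε := by
      rw [e1]
      calc 1 + k * (ε * Real.log 2) ≤ (1 + ε * Real.log 2) ^ k :=
            one_add_mul_le_pow (by nlinarith [mul_pos hε hl]) k
        _ ≤ (P ^ ε) ^ k := by
            gcongr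
            calc 1 + ε * Real.log 2 ≤ Real.exp (ε * Real.log 2) := by
                  linarith [Real.add_one_le_exp (ε * Real.log 2)]
              _ = 2 ^ ε := by rw [Real.rpow_def_of_pos (by norm_num), mul_comm]
              _ ≤ P ^ ε := by gcongr
    have hc := mul_pos hε hl
    calc (k : ℝ) + 1 ≤ (1 + 1 / (ε * Real.log 2)) * (1 + k * (ε * Real.log 2)) := by
          have : (1 + 1 / (ε * Real.log 2)) * (1 + k * (ε * Real.log 2))
            = 1 + k + k * (ε * Real.log 2) + 1 / (ε * Real.log 2) := by field_simp; ring
          rw [this]; have : 0 ≤ k * (ε * Real.log 2) + 1 / (ε * Real.log 2) := by positivity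
          linarith
      _ ≤ _ := by gcongr
  · push Not at h
    have h2 : (2 : ℝ) ≤ P ^ ε := by
      calc (2 : ℝ) = (2 ^ (1/ε)) ^ ε := by
            rw [← Real.rpow_mul (by norm_num)]; field_simp; simp
        _ ≤ _ := by gcongr
    rw [one_mul, e1]
    calc (k : ℝ) + 1 ≤ 1 + k * 1 := by linarith
      _ ≤ (1 + 1) ^ k := one_add_mul_le_pow (by norm_num) k
      _ ≤ _ := by gcongr; linarith

noncomputable instance : StrongNormalizationMonoid GaussianInt :=
  UniqueFactorizationMonoid.strongNormalizationMonoid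

open UniqueFactorizationMonoid

lemma gi_norm_nonneg (z : GaussianInt) : 0 ≤ z.norm := GaussianInt.norm_nonneg z

lemma gi_norm_eq (z : GaussianInt) : z.norm = z.re ^ 2 + z.im ^ 2 := by
  rw [Zsqrtd.norm_def]; ring

lemma gi_norm_unit {z : GaussianInt} (h : IsUnit z) : z.norm = 1 := by
  have := Zsqrtd.norm_eq_one_iff.2 h
  have := gi_norm_nonneg z
  omega

lemma gi_norm_prime {z : GaussianInt} (h : Prime z) : 2 ≤ z.norm := by
  have h1 : z.norm.natAbs ≠ 1 := fun h' => h.not_isUnit (Zsqrtd.norm_eq_one_iff.1 h')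
  have h2 : z.norm ≠ 0 := fun h' => h.ne_zero (GaussianInt.norm_eq_zero.1 h')
  have := gi_norm_nonneg z
  omega

/-- box in the Gaussian integers -/
noncomputable def giBox (b : ℤ) : Finset GaussianInt :=
  ((Finset.Icc (-b) b) ×ˢ (Finset.Icc (-b) b)).image (fun x => (⟨x.1, x.2⟩ : GaussianInt))

lemma mem_giBox {z : GaussianInt} {b : ℤ} (h : z.norm ≤ b) : z ∈ giBox b := by
  rw [gi_norm_eq] at h
  simp only [giBox, Finset.mem_image, Finset.mem_product, Finset.mem_Icc]
  refine ⟨(z.re, z.im), ⟨⟨?_, ?_⟩, ?_, ?_⟩, rfl⟩ <;>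
  nlinarith [sq_nonneg z.re, sq_nonneg z.im, Int.le_self_sq z.re, Int.le_self_sq z.im, Int.le_self_sq (-z.re), Int.le_self_sq (-z.im)]

lemma gi_prod_norm (w : GaussianInt) (hw : w ≠ 0) :
    ∏ π ∈ (normalizedFactors w).toFinset, ((π.norm : ℝ)) ^ ((normalizedFactors w).count π)
      = (w.norm : ℝ) := by
  have h1 := Finset.prod_multiset_map_count (normalizedFactors w) (fun z : GaussianInt => z.norm)
  have h2 : ((normalizedFactors w).map (fun z : GaussianInt => z.norm)).prod
      = (normalizedFactors w).prod.norm := by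
    have := map_multiset_prod (Zsqrtd.normMonoidHom (d := -1)) (normalizedFactors w)
    exact this.symm
  obtain ⟨u, hu⟩ := prod_normalizedFactors hw
  have h3 : (normalizedFactors w).prod.norm = w.norm := by
    conv_rhs => rw [← hu, Zsqrtd.norm_mul, gi_norm_unit u.isUnit, mul_one]
  rw [← h3, ← h2, h1]
  push_cast
  rfl

lemma gi_divisor_bound (ε : ℝ) (hε : 0 < ε) : ∃ C : ℝ, 0 < C ∧ ∀ w : GaussianInt, w ≠ 0 →
    ((∏ π ∈ (normalizedFactors w).toFinset, ((normalizedFactors w).count π + 1) : ℕ) : ℝ)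
      ≤ C * (w.norm : ℝ) ^ ε := by
  have hl : 0 < Real.log 2 := Real.log_pos (by norm_num)
  set K : ℝ := 1 + 1 / (ε * Real.log 2) with hK
  have hK1 : 1 ≤ K := by
    have : 0 ≤ 1 / (ε * Real.log 2) := by positivity
    linarith
  set B : ℝ := 2 ^ (1/ε) with hB
  refine ⟨K ^ (giBox ⌈B⌉).card, by positivity, fun w hw => ?_⟩
  set s := normalizedFactors w with hs
  have hp : ∀ π ∈ s.toFinset, (2 : ℝ) ≤ (π.norm : ℝ) := by
    intro π hπ
    have := gi_norm_prime (prime_of_normalized_factor π (Multiset.mem_toFinset.1 hπ))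
    exact_mod_cast this
  push_cast
  calc ∏ π ∈ s.toFinset, ((s.count π : ℝ) + 1)
      ≤ ∏ π ∈ s.toFinset, ((if (π.norm : ℝ) < B then K else 1) *
          (((π.norm : ℝ)) ^ (s.count π)) ^ ε) := by
        apply Finset.prod_le_prod
        · intros; positivity
        · intro π hπ
          exact aux_pointwise ε hε _ (hp π hπ) _
    _ = (∏ π ∈ s.toFinset, (if (π.norm : ℝ) < B then K else 1)) *
          (∏ π ∈ s.toFinset, (((π.norm : ℝ)) ^ (s.count π))) ^ ε := by
        rw [Finset.prod_mul_distrib, Real.finsetProd_rpow]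
        intro π hπ
        have := hp π hπ
        positivity
    _ ≤ _ := by
        rw [gi_prod_norm w hw]
        have : (0 : ℝ) ≤ (w.norm : ℝ) := by exact_mod_cast gi_norm_nonneg w
        gcongr
        rw [← Finset.prod_filter, Finset.prod_const]
        apply pow_le_pow_right₀ hK1
        apply Finset.card_le_card
        intro π hπ
        rw [Finset.mem_filter] at hπ
        apply mem_giBox
        have h := hπ.2.le.trans (Int.le_ceil B)
        exact_mod_cast h

lemma gi_r2_bound (ε : ℝ) (hε : 0 < ε) : ∃ C : ℝ, 0 < C ∧ ∀ M : ℤ, 1 ≤ M →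
    ∀ T : Finset GaussianInt, (∀ z ∈ T, z.norm = M) → (T.card : ℝ) ≤ C * (M : ℝ) ^ ε := by
  obtain ⟨C, hC, h⟩ := gi_divisor_bound (ε / 2) (by positivity)
  refine ⟨(giBox 1).card * C, ?_, fun M hM T hT => ?_⟩
  · have : 0 < (giBox 1).card := Finset.card_pos.2 ⟨0, mem_giBox (by simp [Zsqrtd.norm_def])⟩
    positivity
  have hw : (M : GaussianInt) ≠ 0 := by
    have : M ≠ 0 := by omega
    exact_mod_cast this
  have hz0 : ∀ z ∈ T, z ≠ 0 := by
    intro z hz h0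
    have := hT z hz
    rw [h0] at this; simp [Zsqrtd.norm_def] at this; omega
  have hdvd : ∀ z ∈ T, z ∣ (M : GaussianInt) := by
    intro z hz
    refine ⟨star z, ?_⟩
    rw [← hT z hz, Zsqrtd.norm_eq_mul_conj]
  have h1 : T.card ≤ (giBox 1).card * (Finset.Iic (normalizedFactors (M : GaussianInt))).card := by
    apply Finset.card_le_mul_card_image_of_maps_to (f := fun z => normalizedFactors z)
    · intro z hz
      rw [Finset.mem_Iic]
      exact (dvd_iff_normalizedFactors_le_normalizedFactors (hz0 z hz) hw).1 (hdvd z hz)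
    · intro b _
      rcases Finset.eq_empty_or_nonempty (T.filter (fun z => normalizedFactors z = b)) with h0 | ⟨z₀, hz₀⟩
      · rw [h0]; simp
      · rw [Finset.mem_filter] at hz₀
        calc _ ≤ ((giBox 1).image (fun u => z₀ * u)).card := by
              apply Finset.card_le_card
              intro z hz
              rw [Finset.mem_filter] at hz
              obtain ⟨u, hu⟩ := (associated_iff_normalizedFactors_eq_normalizedFactors
                (hz0 _ hz₀.1) (hz0 _ hz.1)).2 (hz₀.2.trans hz.2.symm)
              rw [Finset.mem_image]
              exact ⟨u, mem_giBox (gi_norm_unit u.isUnit).le, hu⟩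
          _ ≤ _ := Finset.card_image_le
  rw [Multiset.card_Iic] at h1
  have h2 := h _ hw
  have h3 : ((M : GaussianInt).norm : ℝ) ^ (ε/2) = (M : ℝ) ^ ε := by
    have hM' : (0 : ℝ) ≤ M := by exact_mod_cast (by omega : 0 ≤ M)
    rw [Zsqrtd.norm_intCast]; push_cast
    rw [← pow_two, ← Real.rpow_natCast, ← Real.rpow_mul hM']
    congr 1; push_cast; ring
  rw [h3] at h2
  calc (T.card : ℝ) ≤ ((giBox 1).card : ℝ) * ((∏ π ∈ (normalizedFactors (M : GaussianInt)).toFinset,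
        ((normalizedFactors (M : GaussianInt)).count π + 1) : ℕ) : ℝ) := by exact_mod_cast h1
    _ ≤ (giBox 1).card * (C * (M : ℝ) ^ ε) := by gcongr
    _ = _ := by ring

lemma three_points (σ a b c : ℤ × ℤ) (M : ℤ)
    (ha : (2 * a.1 - σ.1) ^ 2 + (2 * a.2 - σ.2) ^ 2 = M)
    (hb : (2 * b.1 - σ.1) ^ 2 + (2 * b.2 - σ.2) ^ 2 = M)
    (hc : (2 * c.1 - σ.1) ^ 2 + (2 * c.2 - σ.2) ^ 2 = M)
    (hab : a ≠ b) (hac : a ≠ c) (hbc : b ≠ c) :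
    M ≤ ((b.1 - a.1) ^ 2 + (b.2 - a.2) ^ 2) * ((c.1 - a.1) ^ 2 + (c.2 - a.2) ^ 2) *
      ((b.1 - c.1) ^ 2 + (b.2 - c.2) ^ 2) := by
  obtain ⟨x1, hx1⟩ : ∃ x1, x1 = b.1 - a.1 := ⟨_, rfl⟩
  obtain ⟨x2, hx2⟩ : ∃ x2, x2 = b.2 - a.2 := ⟨_, rfl⟩
  obtain ⟨y1, hy1⟩ : ∃ x1, x1 = c.1 - a.1 := ⟨_, rfl⟩
  obtain ⟨y2, hy2⟩ : ∃ x1, x1 = c.2 - a.2 := ⟨_, rfl⟩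
  obtain ⟨v1, hv1⟩ : ∃ x1, x1 = 2 * a.1 - σ.1 := ⟨_, rfl⟩
  obtain ⟨v2, hv2⟩ : ∃ x1, x1 = 2 * a.2 - σ.2 := ⟨_, rfl⟩
  have e1 : b.1 - c.1 = x1 - y1 := by omega
  have e2 : b.2 - c.2 = x2 - y2 := by omega
  rw [← hv1, ← hv2] at ha
  rw [show 2 * b.1 - σ.1 = v1 + 2 * x1 by omega, show 2 * b.2 - σ.2 = v2 + 2 * x2 by omega] at hb
  rw [show 2 * c.1 - σ.1 = v1 + 2 * y1 by omega, show 2 * c.2 - σ.2 = v2 + 2 * y2 by omega] at hc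
  rw [← hx1, ← hx2, ← hy1, ← hy2, e1, e2]
  have hx : x1 ≠ 0 ∨ x2 ≠ 0 := by
    by_contra! h
    exact hab (Prod.ext (by omega) (by omega))
  have hy : y1 ≠ 0 ∨ y2 ≠ 0 := by
    by_contra! h
    exact hac (Prod.ext (by omega) (by omega))
  have hxy : x1 ≠ y1 ∨ x2 ≠ y2 := by
    by_contra! h
    exact hbc (Prod.ext (by omega) (by omega))
  clear hx1 hx2 hy1 hy2 hv1 hv2 e1 e2 hab hac hbc
  have f1 : x1 * v1 + x2 * v2 + (x1 ^ 2 + x2 ^ 2) = 0 := by linarith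
  have f2 : y1 * v1 + y2 * v2 + (y1 ^ 2 + y2 ^ 2) = 0 := by linarith
  have px : 0 < x1 ^ 2 + x2 ^ 2 := by rcases hx with h | h <;> positivity
  have py : 0 < y1 ^ 2 + y2 ^ 2 := by rcases hy with h | h <;> positivity
  have pxy : 0 < (x1 - y1) ^ 2 + (x2 - y2) ^ 2 := by
    rcases hxy with h | h
    · have := sub_ne_zero.2 h; positivity
    · have := sub_ne_zero.2 h; positivity
  have g1 : (x1 * y2 - x2 * y1) * v1 = -((x1 ^ 2 + x2 ^ 2) * y2 - (y1 ^ 2 + y2 ^ 2) * x2) := by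
    linear_combination y2 * f1 - x2 * f2
  have g2 : (x1 * y2 - x2 * y1) * v2 = ((x1 ^ 2 + x2 ^ 2) * y1 - (y1 ^ 2 + y2 ^ 2) * x1) := by
    linear_combination x1 * f2 - y1 * f1
  have key : M * (x1 * y2 - x2 * y1) ^ 2 = (x1 ^ 2 + x2 ^ 2) * (y1 ^ 2 + y2 ^ 2) *
      ((x1 - y1) ^ 2 + (x2 - y2) ^ 2) := by
    rw [← ha]
    calc _ = ((x1 * y2 - x2 * y1) * v1) ^ 2 + ((x1 * y2 - x2 * y1) * v2) ^ 2 := by ring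
      _ = _ := by rw [g1, g2]; ring
  have hd : 1 ≤ (x1 * y2 - x2 * y1) ^ 2 := by
    by_contra! h
    have h0 : (x1 * y2 - x2 * y1) ^ 2 = 0 := by nlinarith [sq_nonneg (x1 * y2 - x2 * y1)]
    rw [h0] at key
    have := mul_pos (mul_pos px py) pxy
    omega
  rw [← key]
  have hM : 0 ≤ M := by rw [← ha]; positivity
  nlinarith

lemma three_points' (σ a b c : ℤ × ℤ) (M L : ℤ)
    (ha : (2 * a.1 - σ.1) ^ 2 + (2 * a.2 - σ.2) ^ 2 = M)
    (hb : (2 * b.1 - σ.1) ^ 2 + (2 * b.2 - σ.2) ^ 2 = M)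
    (hc : (2 * c.1 - σ.1) ^ 2 + (2 * c.2 - σ.2) ^ 2 = M)
    (hab : a ≠ b) (hac : a ≠ c) (hbc : b ≠ c)
    (la : a.1 ^ 2 + a.2 ^ 2 ≤ L) (lb : b.1 ^ 2 + b.2 ^ 2 ≤ L) (lc : c.1 ^ 2 + c.2 ^ 2 ≤ L) :
    M ≤ (4 * L) ^ 3 := by
  refine (three_points σ a b c M ha hb hc hab hac hbc).trans ?_
  have h1 : (b.1 - a.1) ^ 2 + (b.2 - a.2) ^ 2 ≤ 4 * L := by
    nlinarith [sq_nonneg (b.1 + a.1), sq_nonneg (b.2 + a.2)]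
  have h2 : (c.1 - a.1) ^ 2 + (c.2 - a.2) ^ 2 ≤ 4 * L := by
    nlinarith [sq_nonneg (c.1 + a.1), sq_nonneg (c.2 + a.2)]
  have h3 : (b.1 - c.1) ^ 2 + (b.2 - c.2) ^ 2 ≤ 4 * L := by
    nlinarith [sq_nonneg (b.1 + c.1), sq_nonneg (b.2 + c.2)]
  have : 0 ≤ 4 * L := le_trans (by positivity) h1
  calc _ ≤ (4 * L) * (4 * L) * (4 * L) := by gcongr
    _ = _ := by ring

lemma circle_sum (s : ℝ) (hs : 0 < s) : ∃ C : ℝ, 0 < C ∧ ∀ (σ : ℤ × ℤ) (M : ℤ) (T : Finset (ℤ × ℤ)),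
    (∀ m ∈ T, (2 * m.1 - σ.1) ^ 2 + (2 * m.2 - σ.2) ^ 2 = M) →
    ∑ m ∈ T, (1 + ((m.1 : ℝ) ^ 2 + (m.2 : ℝ) ^ 2)) ^ (-s) ≤ C := by
  obtain ⟨C, hC, h⟩ := gi_r2_bound (s / 3) (by positivity)
  refine ⟨2 + C * 4 ^ s, by positivity, fun σ M T hT => ?_⟩
  have hle1 : ∀ m : ℤ × ℤ, (1 + ((m.1 : ℝ) ^ 2 + (m.2 : ℝ) ^ 2)) ^ (-s) ≤ 1 := by
    intro m
    apply Real.rpow_le_one_of_one_le_of_nonpos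
    · have : 0 ≤ ((m.1 : ℝ) ^ 2 + (m.2 : ℝ) ^ 2) := by positivity
      linarith
    · linarith
  have hcard : ∀ S : Finset (ℤ × ℤ), S.card ≤ 2 →
      ∑ m ∈ S, (1 + ((m.1 : ℝ) ^ 2 + (m.2 : ℝ) ^ 2)) ^ (-s) ≤ 2 := by
    intro S hS
    calc _ ≤ ∑ m ∈ S, (1 : ℝ) := Finset.sum_le_sum (fun m _ => hle1 m)
      _ = S.card := by simp
      _ ≤ 2 := by exact_mod_cast hS
  rw [← Finset.sum_filter_add_sum_filter_not T
    (fun m => (4 * (1 + (m.1 ^ 2 + m.2 ^ 2))) ^ 3 < M)]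
  apply add_le_add
  · apply hcard
    by_contra! hcon
    obtain ⟨a, ha, b, hb, c, hc, hab, hac, hbc⟩ := Finset.two_lt_card.1 hcon
    rw [Finset.mem_filter] at ha hb hc
    obtain ⟨L, hL, hL'⟩ : ∃ L : ℤ, (4 * L) ^ 3 < M ∧ (a.1 ^ 2 + a.2 ^ 2 ≤ L ∧
        b.1 ^ 2 + b.2 ^ 2 ≤ L ∧ c.1 ^ 2 + c.2 ^ 2 ≤ L) := by
      rcases le_total (a.1 ^ 2 + a.2 ^ 2) (b.1 ^ 2 + b.2 ^ 2) with h1 | h1 <;>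
      rcases le_total (a.1 ^ 2 + a.2 ^ 2) (c.1 ^ 2 + c.2 ^ 2) with h2 | h2 <;>
      rcases le_total (b.1 ^ 2 + b.2 ^ 2) (c.1 ^ 2 + c.2 ^ 2) with h3 | h3 <;>
      first
        | exact ⟨_, ha.2, by omega, by omega, by omega⟩
        | exact ⟨_, hb.2, by omega, by omega, by omega⟩
        | exact ⟨_, hc.2, by omega, by omega, by omega⟩
    have := three_points' σ a b c M L (hT _ ha.1) (hT _ hb.1) (hT _ hc.1) hab hac hbc hL'.1 hL'.2.1 hL'.2.2
    omega
  · set T' := T.filter (fun m => ¬ (4 * (1 + (m.1 ^ 2 + m.2 ^ 2))) ^ 3 < M) with hT'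
    rcases lt_or_ge M 1 with hM | hM
    · have h1 : T'.card ≤ 1 := by
        rw [Finset.card_le_one]
        intro a ha b hb
        have ha := hT a (Finset.mem_filter.1 ha).1
        have hb := hT b (Finset.mem_filter.1 hb).1
        have q : ∀ x y : ℤ, x ^ 2 + y ^ 2 = M → x = 0 ∧ y = 0 := by
          intro x y hxy
          constructor
          · apply pow_eq_zero_iff (two_ne_zero) |>.1; nlinarith [sq_nonneg x, sq_nonneg y]
          · apply pow_eq_zero_iff (two_ne_zero) |>.1; nlinarith [sq_nonneg x, sq_nonneg y]
        have := q _ _ ha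
        have := q _ _ hb
        exact Prod.ext (by omega) (by omega)
      calc _ ≤ ∑ m ∈ T', (1 : ℝ) := Finset.sum_le_sum (fun m _ => hle1 m)
        _ = T'.card := by simp
        _ ≤ C * 4 ^ s := by
          have h2 := h 1 le_rfl {1} (by intro z hz; simp at hz; rw [hz]; simp [Zsqrtd.norm_def])
          simp at h2
          have h3 : (1 : ℝ) ≤ 4 ^ s := Real.one_le_rpow (by norm_num) hs.le
          have h4 : (T'.card : ℝ) ≤ 1 := by exact_mod_cast h1
          nlinarith
    · have hM0 : (0 : ℝ) < M := by exact_mod_cast (by omega : 0 < M)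
      have hc : (T'.card : ℝ) ≤ C * (M : ℝ) ^ (s / 3) := by
        have := h M hM (T'.image (fun m => (⟨2 * m.1 - σ.1, 2 * m.2 - σ.2⟩ : GaussianInt))) (by
          intro z hz
          rw [Finset.mem_image] at hz
          obtain ⟨m, hm, rfl⟩ := hz
          rw [gi_norm_eq]
          exact hT m (Finset.mem_filter.1 hm).1)
        rwa [Finset.card_image_of_injective] at this
        intro a b hab
        simp only [Zsqrtd.mk.injEq] at hab
        exact Prod.ext (by omega) (by omega)
      have hterm : ∀ m ∈ T', (1 + ((m.1 : ℝ) ^ 2 + (m.2 : ℝ) ^ 2)) ^ (-s) ≤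
          4 ^ s * ((M : ℝ) ^ (s / 3))⁻¹ := by
        intro m hm
        have hm := (Finset.mem_filter.1 hm).2
        push Not at hm
        have hm' : (M : ℝ) ≤ (4 * (1 + ((m.1 : ℝ) ^ 2 + (m.2 : ℝ) ^ 2))) ^ 3 := by exact_mod_cast hm
        set L := (1 + ((m.1 : ℝ) ^ 2 + (m.2 : ℝ) ^ 2)) with hL
        have hL0 : 0 < L := by positivity
        have : (M : ℝ) ^ (s / 3) ≤ 4 ^ s * L ^ s := by
          calc _ ≤ ((4 * L) ^ 3) ^ (s / 3) := by gcongr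
            _ = (4 * L) ^ s := by
              rw [← Real.rpow_natCast, ← Real.rpow_mul (by positivity)]
              congr 1; push_cast; ring
            _ = _ := Real.mul_rpow (by norm_num) hL0.le
        rw [Real.rpow_neg hL0.le]
        have p1 : 0 < (M : ℝ) ^ (s / 3) := by positivity
        have p2 : 0 < L ^ s := by positivity
        rw [← div_eq_mul_inv, le_div_iff₀ p1, inv_mul_le_iff₀ p2]
        linarith
      calc _ ≤ ∑ m ∈ T', 4 ^ s * ((M : ℝ) ^ (s / 3))⁻¹ := Finset.sum_le_sum hterm
        _ = T'.card * (4 ^ s * ((M : ℝ) ^ (s / 3))⁻¹) := by simp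
        _ ≤ (C * (M : ℝ) ^ (s / 3)) * (4 ^ s * ((M : ℝ) ^ (s / 3))⁻¹) := by gcongr
        _ = _ := by
          have p1 : 0 < (M : ℝ) ^ (s / 3) := by positivity
          field_simp

lemma cs_tsum {ι : Type*} (f g : ι → ℝ≥0∞) :
    ∑' i, f i * g i ≤ (∑' i, f i ^ 2) ^ (1/2 : ℝ) * (∑' i, g i ^ 2) ^ (1/2 : ℝ) := by
  rw [ENNReal.tsum_eq_iSup_sum]
  apply iSup_le
  intro T
  have := ENNReal.inner_le_Lp_mul_Lq T f g (p := 2) (q := 2) (by constructor <;> norm_num)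
  refine this.trans ?_
  simp only [ENNReal.rpow_two]
  gcongr <;> exact ENNReal.sum_le_tsum _

lemma sqrt_sq (x : ℝ≥0∞) : (x ^ (1/2 : ℝ)) ^ 2 = x := by
  rw [← ENNReal.rpow_natCast, ← ENNReal.rpow_mul]; norm_num

lemma sqrt_sq' (x : ℝ≥0∞) : (x ^ 2) ^ (1/2 : ℝ) = x := by
  rw [← ENNReal.rpow_natCast, ← ENNReal.rpow_mul]; norm_num

lemma cs_tsum_sq {ι : Type*} (f g : ι → ℝ≥0∞) :
    (∑' i, f i * g i) ^ 2 ≤ (∑' i, f i ^ 2) * (∑' i, g i ^ 2) := by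
  calc _ ≤ ((∑' i, f i ^ 2) ^ (1/2 : ℝ) * (∑' i, g i ^ 2) ^ (1/2 : ℝ)) ^ 2 := by
        gcongr; exact cs_tsum f g
    _ = _ := by rw [mul_pow, sqrt_sq, sqrt_sq]

/-- duality -/
lemma dual_l2 {ι : Type*} (G : ι → ℝ≥0∞) (K : ℝ≥0∞)
    (h : ∀ a : ι → ℝ≥0∞, ∑' i, a i * G i ≤ (∑' i, a i ^ 2) ^ (1/2 : ℝ) * K) :
    (∑' i, G i ^ 2) ^ (1/2 : ℝ) ≤ K := by
  classical
  rcases eq_or_ne K ⊤ with rfl | hK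
  · exact le_top
  have hG : ∀ i, G i ≤ K := by
    intro i
    have := h (Pi.single i 1)
    rw [tsum_eq_single i, tsum_eq_single i] at this
    · simpa using this
    · intro j hj; simp [hj]
    · intro j hj; simp [hj]
  have h2 : ∑' i, G i ^ 2 ≤ K ^ 2 := by
    rw [ENNReal.tsum_eq_iSup_sum]
    apply iSup_le
    intro T
    have := h (fun i => if i ∈ T then G i else 0)
    rw [tsum_eq_sum (s := T), tsum_eq_sum (s := T)] at this
    · have e1 : ∑ i ∈ T, (if i ∈ T then G i else 0) * G i = ∑ i ∈ T, G i ^ 2 :=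
        Finset.sum_congr rfl (fun i hi => by rw [if_pos hi, pow_two])
      have e2 : ∑ i ∈ T, (if i ∈ T then G i else 0) ^ 2 = ∑ i ∈ T, G i ^ 2 :=
        Finset.sum_congr rfl (fun i hi => by rw [if_pos hi])
      rw [e1, e2] at this
      set S := ∑ i ∈ T, G i ^ 2
      have hS : S ≠ ⊤ := by
        refine (ENNReal.sum_lt_top.2 fun i _ => ?_).ne
        exact ENNReal.pow_lt_top ((hG i).trans_lt hK.lt_top)
      have hr : S ^ (1/2 : ℝ) ≤ K := by
        rcases eq_or_ne S 0 with h0 | h0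
        · rw [h0]; simp
        have hp0 : S ^ (1/2 : ℝ) ≠ 0 := by simp [h0]
        have hpt : S ^ (1/2 : ℝ) ≠ ⊤ := by simp [hS]
        nth_rewrite 1 [← sqrt_sq S] at this
        rw [pow_two] at this
        exact (ENNReal.mul_le_mul_iff_right hp0 hpt).1 this
      calc S = (S ^ (1/2 : ℝ)) ^ 2 := (sqrt_sq S).symm
        _ ≤ _ := by gcongr
    · intro i hi; simp [hi]
    · intro i hi; simp [hi]
  calc _ ≤ (K ^ 2) ^ (1/2 : ℝ) := by gcongr
    _ = K := sqrt_sq' K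

lemma fiber_sq {P κ : Type*} [DecidableEq κ] (φ : P → κ) (f : P → ℝ≥0∞) :
    ∑' k, (∑' p, if φ p = k then f p else 0) ^ 2
      = ∑' p, ∑' p', if φ p = φ p' then f p * f p' else 0 := by
  have : ∀ k, (∑' p, if φ p = k then f p else 0) ^ 2
      = ∑' p, ∑' p', if φ p = k then (if φ p = φ p' then f p * f p' else 0) else 0 := by
    intro k
    rw [pow_two, ← ENNReal.tsum_mul_right]
    refine tsum_congr fun p => ?_
    rw [← ENNReal.tsum_mul_left]
    refine tsum_congr fun p' => ?_
    by_cases h : φ p = k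
    · subst h
      simp [eq_comm]
    · simp [h]
  simp_rw [this]
  rw [ENNReal.tsum_comm]
  refine tsum_congr fun p => ?_
  rw [ENNReal.tsum_comm]
  refine tsum_congr fun p' => ?_
  exact (tsum_eq_single (φ p) (fun k hk => if_neg hk.symm)).trans (if_pos rfl)

lemma fiber_cs {P R κ : Type*} [DecidableEq κ] (φ : P → κ) (ψ : R → κ) (f : P → ℝ≥0∞) (g : R → ℝ≥0∞) :
    ∑' p, ∑' r, (if φ p = ψ r then f p * g r else 0)
      ≤ (∑' p, ∑' p', if φ p = φ p' then f p * f p' else 0) ^ (1/2 : ℝ) *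
        (∑' p, ∑' p', if ψ p = ψ p' then g p * g p' else 0) ^ (1/2 : ℝ) := by
  rw [← fiber_sq, ← fiber_sq]
  refine le_trans (le_of_eq ?_) (cs_tsum _ _)
  have : ∀ k, (∑' p, if φ p = k then f p else 0) * (∑' r, if ψ r = k then g r else 0)
      = ∑' p, ∑' r, if φ p = k then (if φ p = ψ r then f p * g r else 0) else 0 := by
    intro k
    rw [← ENNReal.tsum_mul_right]
    refine tsum_congr fun p => ?_
    rw [← ENNReal.tsum_mul_left]
    refine tsum_congr fun p' => ?_
    by_cases h : φ p = k
    · subst h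
      simp [eq_comm]
    · simp [h]
  simp_rw [this]
  symm
  rw [ENNReal.tsum_comm]
  refine tsum_congr fun p => ?_
  rw [ENNReal.tsum_comm]
  refine tsum_congr fun p' => ?_
  exact (tsum_eq_single (φ p) (fun k hk => if_neg hk.symm)).trans (if_pos rfl)

/-- sum/energy key of a pair -/
def trKey (p : (ℤ × ℤ) × (ℤ × ℤ)) : (ℤ × ℤ) × ℤ :=
  (p.1 + p.2, (p.1.1 ^ 2 + p.1.2 ^ 2) + (p.2.1 ^ 2 + p.2.2 ^ 2))

/-- difference/energy-difference key of a pair -/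
def trDiff (p : (ℤ × ℤ) × (ℤ × ℤ)) : (ℤ × ℤ) × ℤ :=
  (p.1 - p.2, (p.1.1 ^ 2 + p.1.2 ^ 2) - (p.2.1 ^ 2 + p.2.2 ^ 2))

lemma jb_pos (n : ℤ × ℤ) : 0 < jbZ2 n := by
  unfold jbZ2; positivity

lemma jb_rpow (n : ℤ × ℤ) (s : ℝ) :
    jbZ2 n ^ (2 * s) = (1 + ((n.1 : ℝ) ^ 2 + (n.2 : ℝ) ^ 2)) ^ s := by
  have h : (0 : ℝ) ≤ 1 + ((n.1 : ℝ) ^ 2 + (n.2 : ℝ) ^ 2) := by positivity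
  unfold jbZ2
  rw [Real.sqrt_eq_rpow, ← Real.rpow_mul h]
  congr 1; ring

/-- the weight -/
noncomputable def wt (s : ℝ) (n : ℤ × ℤ) : ℝ≥0∞ := ENNReal.ofReal (jbZ2 n ^ (2 * s))

lemma wt_ne_zero (s : ℝ) (n : ℤ × ℤ) : wt s n ≠ 0 := by
  have := Real.rpow_pos_of_pos (jb_pos n) (2 * s)
  simp [wt, this]

lemma wt_ne_top (s : ℝ) (n : ℤ × ℤ) : wt s n ≠ ⊤ := by simp [wt]

lemma wt_inv (s : ℝ) (n : ℤ × ℤ) :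
    (wt s n)⁻¹ = ENNReal.ofReal ((1 + ((n.1 : ℝ) ^ 2 + (n.2 : ℝ) ^ 2)) ^ (-s)) := by
  have h : (0 : ℝ) < 1 + ((n.1 : ℝ) ^ 2 + (n.2 : ℝ) ^ 2) := by positivity
  rw [wt, jb_rpow, Real.rpow_neg h.le, ENNReal.ofReal_inv_of_pos (by positivity)]

lemma circle_enn (s : ℝ) (hs : 0 < s) : ∃ C : ℝ, 0 < C ∧ ∀ k : (ℤ × ℤ) × ℤ,
    (∑' p, if trKey p = k then (wt s p.2)⁻¹ else 0) ≤ ENNReal.ofReal C := by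
  obtain ⟨C, hC, h⟩ := circle_sum s hs
  refine ⟨C, hC, fun k => ?_⟩
  rw [ENNReal.tsum_eq_iSup_sum]
  apply iSup_le
  intro T
  rw [← Finset.sum_filter]
  set T' := T.filter (fun p => trKey p = k) with hT'
  have hk : ∀ p ∈ T', trKey p = k := fun p hp => (Finset.mem_filter.1 hp).2
  have hinj : Set.InjOn (fun p : (ℤ × ℤ) × (ℤ × ℤ) => p.2) (T' : Set ((ℤ × ℤ) × (ℤ × ℤ))) := by
    intro p hp q hq hpq
    have h1 := (hk p hp).trans (hk q hq).symm
    simp only [trKey, Prod.mk.injEq] at h1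
    simp only at hpq
    refine Prod.ext ?_ hpq
    have := h1.1
    rw [hpq] at this
    exact add_right_cancel this
  have h1 := h k.1 (2 * k.2 - (k.1.1 ^ 2 + k.1.2 ^ 2)) (T'.image (fun p => p.2)) (by
    intro m hm
    rw [Finset.mem_image] at hm
    obtain ⟨p, hp, rfl⟩ := hm
    rw [← hk p hp]
    simp only [trKey, Prod.fst_add, Prod.snd_add]
    ring)
  rw [Finset.sum_image hinj] at h1
  simp_rw [wt_inv]
  rw [← ENNReal.ofReal_sum_of_nonneg (fun _ _ => by positivity)]
  exact ENNReal.ofReal_le_ofReal h1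

lemma bilin_key (s : ℝ) (C : ℝ≥0∞)
    (hC : ∀ k : (ℤ × ℤ) × ℤ, (∑' p, if trKey p = k then (wt s p.2)⁻¹ else 0) ≤ C)
    (a b : ℤ × ℤ → ℝ≥0∞) :
    (∑' p, ∑' p', if trKey p = trKey p' then (a p.1 * b p.2) * (a p'.1 * b p'.2) else 0)
      ≤ C * ((∑' n, a n ^ 2) * (∑' n, wt s n * b n ^ 2)) := by
  rw [← fiber_sq trKey (fun p => a p.1 * b p.2)]
  have h1 : ∀ k : (ℤ × ℤ) × ℤ, (∑' p, if trKey p = k then a p.1 * b p.2 else 0) ^ 2 ≤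
      C * ∑' p, if trKey p = k then a p.1 ^ 2 * (wt s p.2 * b p.2 ^ 2) else 0 := by
    intro k
    have e : ∀ p : (ℤ × ℤ) × (ℤ × ℤ), (if trKey p = k then a p.1 * b p.2 else 0) =
        (if trKey p = k then ((wt s p.2)⁻¹) ^ (1/2 : ℝ) else 0) *
        (if trKey p = k then a p.1 * ((wt s p.2) ^ (1/2 : ℝ) * b p.2) else 0) := by
      intro p
      split_ifs
      · have : ((wt s p.2)⁻¹) ^ (1/2 : ℝ) * (wt s p.2) ^ (1/2 : ℝ) = 1 := by
          rw [← ENNReal.mul_rpow_of_nonneg _ _ (by norm_num),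
            ENNReal.inv_mul_cancel (wt_ne_zero _ _) (wt_ne_top _ _), ENNReal.one_rpow]
        calc a p.1 * b p.2 = (((wt s p.2)⁻¹) ^ (1/2 : ℝ) * (wt s p.2) ^ (1/2 : ℝ)) *
              (a p.1 * b p.2) := by rw [this, one_mul]
          _ = _ := by ring
      · simp
    simp_rw [e]
    refine (cs_tsum_sq _ _).trans ?_
    refine mul_le_mul' (le_trans (le_of_eq (tsum_congr fun p => ?_)) (hC k))
      (le_of_eq (tsum_congr fun p => ?_))
    · split_ifs
      · exact sqrt_sq _
      · simp
    · split_ifs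
      · rw [mul_pow, mul_pow, sqrt_sq]
      · simp
  calc _ ≤ ∑' k, C * ∑' p, if trKey p = k then a p.1 ^ 2 * (wt s p.2 * b p.2 ^ 2) else 0 :=
        ENNReal.tsum_le_tsum h1
    _ = C * ∑' p : (ℤ × ℤ) × (ℤ × ℤ), a p.1 ^ 2 * (wt s p.2 * b p.2 ^ 2) := by
        rw [ENNReal.tsum_mul_left, ENNReal.tsum_comm]
        congr 1
        refine tsum_congr fun p => ?_
        exact (tsum_eq_single (trKey p) (fun k hk => if_neg hk.symm)).trans (if_pos rfl)
    _ = _ := by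
        congr 1
        rw [ENNReal.tsum_prod', ← ENNReal.tsum_mul_right]
        refine tsum_congr fun n => ?_
        rw [← ENNReal.tsum_mul_left]

lemma tprodV (f : (ℤ × ℤ) × (ℤ × ℤ) → ℝ≥0∞) : ∑' p, f p = ∑' n, ∑' m, f (n, m) :=
  ENNReal.tsum_prod'

lemma tprodV3 (f : (ℤ × ℤ) × (ℤ × ℤ) × (ℤ × ℤ) → ℝ≥0∞) :
    ∑' p, f p = ∑' n, ∑' m, ∑' l, f (n, m, l) := by
  rw [ENNReal.tsum_prod']
  exact tsum_congr fun n => ENNReal.tsum_prod'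

lemma diff_eq_key (a b : ℤ × ℤ → ℝ≥0∞) :
    (∑' p, ∑' p', if trDiff p = trDiff p' then (a p.1 * b p.2) * (a p'.1 * b p'.2) else 0)
      = ∑' p, ∑' p', if trKey p = trKey p' then (a p.1 * b p.2) * (a p'.1 * b p'.2) else 0 := by
  simp only [tprodV]
  refine tsum_congr fun n => ?_
  have : ∀ f : ℤ × ℤ → ℤ × ℤ → ℤ × ℤ → ℝ≥0∞,
      ∑' m, ∑' n', ∑' m', f m n' m' = ∑' m, ∑' n', ∑' m', f m' n' m := by
    intro f
    calc ∑' m, ∑' n', ∑' m', f m n' m' = ∑' n', ∑' m, ∑' m', f m n' m' := ENNReal.tsum_comm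
      _ = ∑' n', ∑' m, ∑' m', f m' n' m := tsum_congr fun n' => ENNReal.tsum_comm
      _ = _ := ENNReal.tsum_comm
  rw [this]
  refine tsum_congr fun m => tsum_congr fun n' => tsum_congr fun m' => ?_
  have e : trDiff (n, m') = trDiff (n', m) ↔ trKey (n, m) = trKey (n', m') := by
    simp only [trDiff, trKey, Prod.mk.injEq, Prod.ext_iff, Prod.fst_add, Prod.snd_add,
      Prod.fst_sub, Prod.snd_sub]
    constructor
    · rintro ⟨⟨h1, h2⟩, h3⟩
      exact ⟨⟨by omega, by omega⟩, by omega⟩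
    · rintro ⟨⟨h1, h2⟩, h3⟩
      exact ⟨⟨by omega, by omega⟩, by omega⟩
  rw [if_congr e rfl rfl]
  split_ifs
  · ring
  · rfl

/-- the quadrilinear condition -/
def trCond (μ : ℤ) (n n₁ n₂ n₃ : ℤ × ℤ) : Prop := n₁ - n₂ + n₃ = n ∧ PhiZ2 n n₁ n₂ n₃ = μ

instance (μ : ℤ) (n n₁ n₂ n₃ : ℤ × ℤ) : Decidable (trCond μ n n₁ n₂ n₃) := by
  unfold trCond; infer_instance

lemma expand (μ : ℤ) (a w₁ w₂ w₃ : ℤ × ℤ → ℝ≥0∞) :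
    (∑' n : ℤ × ℤ, a n * (∑' p : {q : (ℤ × ℤ) × (ℤ × ℤ) × (ℤ × ℤ) //
                q.1 - q.2.1 + q.2.2 = n ∧ PhiZ2 n q.1 q.2.1 q.2.2 = μ},
              (w₁ p.1.1 * w₂ p.1.2.1 * w₃ p.1.2.2)))
    = ∑' n, ∑' n₁, ∑' n₂, ∑' n₃, if trCond μ n n₁ n₂ n₃ then a n * (w₁ n₁ * w₂ n₂ * w₃ n₃) else 0 := by
  refine tsum_congr fun n => ?_
  have h1 : (∑' p : {q : (ℤ × ℤ) × (ℤ × ℤ) × (ℤ × ℤ) //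
                q.1 - q.2.1 + q.2.2 = n ∧ PhiZ2 n q.1 q.2.1 q.2.2 = μ},
              (w₁ p.1.1 * w₂ p.1.2.1 * w₃ p.1.2.2)) =
      ∑' q : (ℤ × ℤ) × (ℤ × ℤ) × (ℤ × ℤ), if trCond μ n q.1 q.2.1 q.2.2 then
        (w₁ q.1 * w₂ q.2.1 * w₃ q.2.2) else 0 := by
    refine (tsum_subtype {q : (ℤ × ℤ) × (ℤ × ℤ) × (ℤ × ℤ) |
      q.1 - q.2.1 + q.2.2 = n ∧ PhiZ2 n q.1 q.2.1 q.2.2 = μ}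
      (fun q => (w₁ q.1 * w₂ q.2.1 * w₃ q.2.2))).trans (tsum_congr fun q => ?_)
    by_cases h : trCond μ n q.1 q.2.1 q.2.2
    · rw [if_pos h, Set.indicator_of_mem]; exact h
    · rw [if_neg h, Set.indicator_of_notMem]; exact h
  rw [h1, ← ENNReal.tsum_mul_left]
  rw [tprodV3]
  simp only [mul_ite, mul_zero]

lemma form_key (μ : ℤ) (a w₁ w₂ w₃ : ℤ × ℤ → ℝ≥0∞) :
    (∑' n, ∑' n₁, ∑' n₂, ∑' n₃, if trCond μ n n₁ n₂ n₃ then a n * (w₁ n₁ * w₂ n₂ * w₃ n₃) else 0)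
    ≤ (∑' p, ∑' p', if trKey p = trKey p' then (a p.1 * w₂ p.2) * (a p'.1 * w₂ p'.2) else 0)
        ^ (1/2 : ℝ) *
      (∑' p, ∑' p', if trKey p = trKey p' then (w₁ p.1 * w₃ p.2) * (w₁ p'.1 * w₃ p'.2) else 0)
        ^ (1/2 : ℝ) := by
  have h := fiber_cs trKey (fun r => trKey r + (0, μ)) (fun p => a p.1 * w₂ p.2)
    (fun p => w₁ p.1 * w₃ p.2)
  simp only [add_left_inj] at h
  refine le_trans (le_of_eq ?_) h
  simp only [tprodV]
  refine tsum_congr fun n => ?_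
  rw [ENNReal.tsum_comm]
  refine tsum_congr fun n₂ => tsum_congr fun n₁ => tsum_congr fun n₃ => ?_
  have e : trCond μ n n₁ n₂ n₃ ↔ trKey (n, n₂) = trKey (n₁, n₃) + (0, μ) := by
    simp only [trCond, PhiZ2, trKey, Prod.ext_iff, Prod.fst_add, Prod.snd_add,
      Prod.fst_sub, Prod.snd_sub, Prod.fst_zero, Prod.snd_zero]
    constructor
    · rintro ⟨⟨h1, h2⟩, h3⟩
      exact ⟨⟨by omega, by omega⟩, by omega⟩
    · rintro ⟨⟨h1, h2⟩, h3⟩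
      exact ⟨⟨by omega, by omega⟩, by omega⟩
  rw [if_congr e rfl rfl]
  split_ifs
  · ring
  · rfl

lemma form_diff (μ : ℤ) (a w₁ w₂ w₃ : ℤ × ℤ → ℝ≥0∞) :
    (∑' n, ∑' n₁, ∑' n₂, ∑' n₃, if trCond μ n n₁ n₂ n₃ then a n * (w₁ n₁ * w₂ n₂ * w₃ n₃) else 0)
    ≤ (∑' p, ∑' p', if trKey p = trKey p' then (a p.1 * w₁ p.2) * (a p'.1 * w₁ p'.2) else 0)
        ^ (1/2 : ℝ) *
      (∑' p, ∑' p', if trKey p = trKey p' then (w₂ p.1 * w₃ p.2) * (w₂ p'.1 * w₃ p'.2) else 0)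
        ^ (1/2 : ℝ) := by
  have h := fiber_cs trDiff (fun r => - trDiff r + (0, μ)) (fun p => a p.1 * w₁ p.2)
    (fun p => w₂ p.1 * w₃ p.2)
  simp only [add_left_inj, neg_inj] at h
  rw [diff_eq_key, diff_eq_key] at h
  refine le_trans (le_of_eq ?_) h
  simp only [tprodV]
  refine tsum_congr fun n => tsum_congr fun n₁ => tsum_congr fun n₂ => tsum_congr fun n₃ => ?_
  have e : trCond μ n n₁ n₂ n₃ ↔ trDiff (n, n₁) = - trDiff (n₂, n₃) + (0, μ) := by
    simp only [trCond, PhiZ2, trDiff, Prod.ext_iff, Prod.fst_add, Prod.snd_add,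
      Prod.fst_sub, Prod.snd_sub, Prod.fst_zero, Prod.snd_zero, Prod.fst_neg, Prod.snd_neg]
    constructor
    · rintro ⟨⟨h1, h2⟩, h3⟩
      exact ⟨⟨by omega, by omega⟩, by omega⟩
    · rintro ⟨⟨h1, h2⟩, h3⟩
      exact ⟨⟨by omega, by omega⟩, by omega⟩
  rw [if_congr e rfl rfl]
  split_ifs
  · ring
  · rfl

lemma trCond_symm (μ : ℤ) (n n₁ n₂ n₃ : ℤ × ℤ) : trCond μ n n₁ n₂ n₃ ↔ trCond μ n n₃ n₂ n₁ := by
  simp only [trCond, PhiZ2, Prod.ext_iff, Prod.fst_add, Prod.snd_add, Prod.fst_sub, Prod.snd_sub]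
  constructor
  · rintro ⟨⟨h1, h2⟩, h3⟩
    exact ⟨⟨by omega, by omega⟩, by omega⟩
  · rintro ⟨⟨h1, h2⟩, h3⟩
    exact ⟨⟨by omega, by omega⟩, by omega⟩

lemma form_symm (μ : ℤ) (a w₁ w₂ w₃ : ℤ × ℤ → ℝ≥0∞) :
    (∑' n, ∑' n₁, ∑' n₂, ∑' n₃, if trCond μ n n₁ n₂ n₃ then a n * (w₁ n₁ * w₂ n₂ * w₃ n₃) else 0)
    = ∑' n, ∑' n₁, ∑' n₂, ∑' n₃, if trCond μ n n₁ n₂ n₃ then a n * (w₃ n₁ * w₂ n₂ * w₁ n₃) else 0 := by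
  refine tsum_congr fun n => ?_
  have : ∀ f : ℤ × ℤ → ℤ × ℤ → ℤ × ℤ → ℝ≥0∞,
      ∑' m, ∑' n', ∑' m', f m n' m' = ∑' m, ∑' n', ∑' m', f m' n' m := by
    intro f
    calc ∑' m, ∑' n', ∑' m', f m n' m' = ∑' n', ∑' m, ∑' m', f m n' m' := ENNReal.tsum_comm
      _ = ∑' n', ∑' m, ∑' m', f m' n' m := tsum_congr fun n' => ENNReal.tsum_comm
      _ = _ := ENNReal.tsum_comm
  rw [this]
  refine tsum_congr fun n₁ => tsum_congr fun n₂ => tsum_congr fun n₃ => ?_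
  rw [if_congr (trCond_symm μ n n₃ n₂ n₁) rfl rfl]
  split_ifs
  · ring
  · rfl

lemma l2s_zero (ω : ℤ × ℤ → ℝ≥0) : l2sZ2 0 ω = (∑' n, (ω n : ℝ≥0∞) ^ 2) ^ (1/2 : ℝ) := by
  simp [l2sZ2]

lemma l2s_wt (s : ℝ) (ω : ℤ × ℤ → ℝ≥0) :
    l2sZ2 s ω = (∑' n, wt s n * (ω n : ℝ≥0∞) ^ 2) ^ (1/2 : ℝ) := rfl

lemma sqrt_combine (C A B D E : ℝ≥0∞) :
    (C * (A * B)) ^ (1/2 : ℝ) * (C * (D * E)) ^ (1/2 : ℝ) =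
      A ^ (1/2 : ℝ) * (C * B ^ (1/2 : ℝ) * D ^ (1/2 : ℝ) * E ^ (1/2 : ℝ)) := by
  have h : (0 : ℝ) ≤ 1/2 := by norm_num
  simp only [ENNReal.mul_rpow_of_nonneg _ _ h]
  calc _ = (C ^ (1/2 : ℝ)) ^ 2 *
        (A ^ (1/2 : ℝ) * (B ^ (1/2 : ℝ) * D ^ (1/2 : ℝ) * E ^ (1/2 : ℝ))) := by ring
    _ = _ := by rw [sqrt_sq]; ring

/-- Trilinear estimate on the level set `Φ = μ`, uniform in `μ`:
for every `s₁ > 0` and each `j ∈ {1,2,3}`, the `ℓ²` norm of the restricted convolution is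
bounded by `C ‖ω⁽ʲ⁾‖_{ℓ²} ∏_{l≠j} ‖ω⁽ˡ⁾‖_{ℓ²_{s₁}}`. -/
theorem trilinear_resonance_estimate (s₁ : ℝ) (hs₁ : 0 < s₁) :
    ∃ C : ℝ, 0 < C ∧
      ∀ (μ : ℤ) (ω₁ ω₂ ω₃ : ℤ × ℤ → ℝ≥0),
        (∑' n : ℤ × ℤ,
            (∑' p : {q : (ℤ × ℤ) × (ℤ × ℤ) × (ℤ × ℤ) //
                q.1 - q.2.1 + q.2.2 = n ∧ PhiZ2 n q.1 q.2.1 q.2.2 = μ},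
              ((ω₁ p.1.1 : ℝ≥0∞) * (ω₂ p.1.2.1 : ℝ≥0∞) * (ω₃ p.1.2.2 : ℝ≥0∞))) ^ 2) ^ (1/2 : ℝ)
          ≤ ENNReal.ofReal C * l2sZ2 0 ω₁ * l2sZ2 s₁ ω₂ * l2sZ2 s₁ ω₃ ∧
        (∑' n : ℤ × ℤ,
            (∑' p : {q : (ℤ × ℤ) × (ℤ × ℤ) × (ℤ × ℤ) //
                q.1 - q.2.1 + q.2.2 = n ∧ PhiZ2 n q.1 q.2.1 q.2.2 = μ},
              ((ω₁ p.1.1 : ℝ≥0∞) * (ω₂ p.1.2.1 : ℝ≥0∞) * (ω₃ p.1.2.2 : ℝ≥0∞))) ^ 2) ^ (1/2 : ℝ)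
          ≤ ENNReal.ofReal C * l2sZ2 s₁ ω₁ * l2sZ2 0 ω₂ * l2sZ2 s₁ ω₃ ∧
        (∑' n : ℤ × ℤ,
            (∑' p : {q : (ℤ × ℤ) × (ℤ × ℤ) × (ℤ × ℤ) //
                q.1 - q.2.1 + q.2.2 = n ∧ PhiZ2 n q.1 q.2.1 q.2.2 = μ},
              ((ω₁ p.1.1 : ℝ≥0∞) * (ω₂ p.1.2.1 : ℝ≥0∞) * (ω₃ p.1.2.2 : ℝ≥0∞))) ^ 2) ^ (1/2 : ℝ)
          ≤ ENNReal.ofReal C * l2sZ2 s₁ ω₁ * l2sZ2 s₁ ω₂ * l2sZ2 0 ω₃ := by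
  obtain ⟨C, hC0, hC⟩ := circle_enn s₁ hs₁
  refine ⟨C, hC0, fun μ ω₁ ω₂ ω₃ => ⟨?_, ?_, ?_⟩⟩
  · apply dual_l2
    intro a
    rw [expand μ a (fun n => (ω₁ n : ℝ≥0∞)) (fun n => (ω₂ n : ℝ≥0∞)) (fun n => (ω₃ n : ℝ≥0∞))]
    refine (form_key _ _ _ _ _).trans ?_
    have q1 := bilin_key s₁ _ hC a (fun n => (ω₂ n : ℝ≥0∞))
    have q2 := bilin_key s₁ _ hC (fun n => (ω₁ n : ℝ≥0∞)) (fun n => (ω₃ n : ℝ≥0∞))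
    refine (mul_le_mul' (ENNReal.rpow_le_rpow (z := 1/2) q1 (by norm_num))
      (ENNReal.rpow_le_rpow (z := 1/2) q2 (by norm_num))).trans (le_of_eq ?_)
    rw [sqrt_combine, l2s_zero, l2s_wt, l2s_wt]
    ring
  · apply dual_l2
    intro a
    rw [expand μ a (fun n => (ω₁ n : ℝ≥0∞)) (fun n => (ω₂ n : ℝ≥0∞)) (fun n => (ω₃ n : ℝ≥0∞))]
    refine (form_diff _ _ _ _ _).trans ?_
    have q1 := bilin_key s₁ _ hC a (fun n => (ω₁ n : ℝ≥0∞))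
    have q2 := bilin_key s₁ _ hC (fun n => (ω₂ n : ℝ≥0∞)) (fun n => (ω₃ n : ℝ≥0∞))
    refine (mul_le_mul' (ENNReal.rpow_le_rpow (z := 1/2) q1 (by norm_num))
      (ENNReal.rpow_le_rpow (z := 1/2) q2 (by norm_num))).trans (le_of_eq ?_)
    rw [sqrt_combine, l2s_zero, l2s_wt, l2s_wt]
  · apply dual_l2
    intro a
    rw [expand μ a (fun n => (ω₁ n : ℝ≥0∞)) (fun n => (ω₂ n : ℝ≥0∞)) (fun n => (ω₃ n : ℝ≥0∞)),
      form_symm μ a (fun n => (ω₁ n : ℝ≥0∞)) (fun n => (ω₂ n : ℝ≥0∞)) (fun n => (ω₃ n : ℝ≥0∞))]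
    refine (form_key _ _ _ _ _).trans ?_
    have q1 := bilin_key s₁ _ hC a (fun n => (ω₂ n : ℝ≥0∞))
    have q2 := bilin_key s₁ _ hC (fun n => (ω₃ n : ℝ≥0∞)) (fun n => (ω₁ n : ℝ≥0∞))
    refine (mul_le_mul' (ENNReal.rpow_le_rpow (z := 1/2) q1 (by norm_num))
      (ENNReal.rpow_le_rpow (z := 1/2) q2 (by norm_num))).trans (le_of_eq ?_)
    rw [sqrt_combine, l2s_zero, l2s_wt, l2s_wt]
    ring
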